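/- arXiv:2104.05962 — 5 statements merged into one kernel-verified Lean document; each statement's English description precedes it below -/
import Mathlib

section
/- (Hales–Jewett theorem, subspace form) For every positive integer m and all finite non-empty sets Λ (the alphabet) and C (the colors), there exists a positive integer k such that for every finite linear order M of size k and every coloring d: U_{M,Λ} → C there exists a d-monochromatic m-dimensional subspace of U_{M,Λ}. The minimal such k is denoted hj_C(m,Λ). -/
open Finset

/-- `ν` belongs to the subspace `S(⟨Ms ℓ : ℓ < m⟩, ρ)` of `U_{Fin k, Λ}`: it agrees with `ρ`
off the blocks and is constant on each block `Ms ℓ`. -/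
def InSubspace {Λ : Type*} {k m : ℕ} (Ms : Fin m → Finset (Fin k))
    (ρ : Fin k → Λ) (ν : Fin k → Λ) : Prop :=
  (∀ t : Fin k, (∀ ℓ, t ∉ Ms ℓ) → ν t = ρ t) ∧
    ∀ ℓ : Fin m, ∃ a : Λ, ∀ t ∈ Ms ℓ, ν t = a

/-- The number of blocks `Ms ℓ` on which `ν` is constantly `α`. -/
def blockCount {Λ : Type*} [DecidableEq Λ] {k m : ℕ} (Ms : Fin m → Finset (Fin k))
    (ν : Fin k → Λ) (α : Λ) : ℕ :=
  (Finset.univ.filter fun ℓ : Fin m => ∀ t ∈ Ms ℓ, ν t = α).card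

/-- `k` is large enough for the `m`-dimensional Hales-Jewett property: every `C`-coloring of
`U_{Fin k, Λ}` admits a monochromatic `m`-dimensional subspace. -/
def HJProp (Λ C : Type*) (m k : ℕ) : Prop :=
  ∀ d : (Fin k → Λ) → C,
    ∃ (Ms : Fin m → Finset (Fin k)) (ρ : Fin k → Λ),
      (∀ ℓ, (Ms ℓ).Nonempty) ∧
      (∀ ℓ₁ ℓ₂, ℓ₁ ≠ ℓ₂ → Disjoint (Ms ℓ₁) (Ms ℓ₂)) ∧
      ∃ c : C, ∀ ν, InSubspace Ms ρ ν → d ν = c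

/-- The Hales-Jewett number `hj_C(m, Λ)`. -/
noncomputable def hjNum (Λ C : Type*) (m : ℕ) : ℕ := sInf {k | HJProp Λ C m k}

/-- Like `HJProp`, but the blocks of the monochromatic subspace all have the same size. -/
def HJEqProp (Λ C : Type*) (m k : ℕ) : Prop :=
  ∀ d : (Fin k → Λ) → C,
    ∃ (Ms : Fin m → Finset (Fin k)) (ρ : Fin k → Λ),
      (∀ ℓ, (Ms ℓ).Nonempty) ∧
      (∀ ℓ₁ ℓ₂, ℓ₁ ≠ ℓ₂ → Disjoint (Ms ℓ₁) (Ms ℓ₂)) ∧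
      (∀ ℓ₁ ℓ₂, (Ms ℓ₁).card = (Ms ℓ₂).card) ∧
      ∃ c : C, ∀ ν, InSubspace Ms ρ ν → d ν = c

/-- The number `hj^=_C(m, Λ)`. -/
noncomputable def hjEqNum (Λ C : Type*) (m : ℕ) : ℕ := sInf {k | HJEqProp Λ C m k}

/-- The partition property underlying `f^8_Λ(m, C)`: `d` is constant on the set of members
`ν` of the subspace realizing each letter `α` on exactly `m / |Λ|` many blocks. -/
def F8Prop (Λ C : Type*) [Fintype Λ] [DecidableEq Λ] (m k : ℕ) : Prop :=
  ∀ d : (Fin k → Λ) → C,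
    ∃ (Ms : Fin m → Finset (Fin k)) (ρ : Fin k → Λ),
      (∀ ℓ, (Ms ℓ).Nonempty) ∧
      (∀ ℓ₁ ℓ₂, ℓ₁ ≠ ℓ₂ → Disjoint (Ms ℓ₁) (Ms ℓ₂)) ∧
      ∃ c : C, ∀ ν, InSubspace Ms ρ ν →
        (∀ α : Λ, blockCount Ms ν α = m / Fintype.card Λ) → d ν = c

/-- Shelah's number `f^8_Λ(m, C)`. -/
noncomputable def f8 (Λ C : Type*) [Fintype Λ] [DecidableEq Λ] (m : ℕ) : ℕ :=
  sInf {k | F8Prop Λ C m k}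

/-- As `F8Prop`, but with all blocks of the same size. -/
def F9Prop (Λ C : Type*) [Fintype Λ] [DecidableEq Λ] (m k : ℕ) : Prop :=
  ∀ d : (Fin k → Λ) → C,
    ∃ (Ms : Fin m → Finset (Fin k)) (ρ : Fin k → Λ),
      (∀ ℓ, (Ms ℓ).Nonempty) ∧
      (∀ ℓ₁ ℓ₂, ℓ₁ ≠ ℓ₂ → Disjoint (Ms ℓ₁) (Ms ℓ₂)) ∧
      (∀ ℓ₁ ℓ₂, (Ms ℓ₁).card = (Ms ℓ₂).card) ∧
      ∃ c : C, ∀ ν, InSubspace Ms ρ ν →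
        (∀ α : Λ, blockCount Ms ν α = m / Fintype.card Λ) → d ν = c

/-- Shelah's number `f^9_Λ(m, C)`: the minimal `k` divisible by `|Λ|` with `F9Prop`. -/
noncomputable def f9 (Λ C : Type*) [Fintype Λ] [DecidableEq Λ] (m : ℕ) : ℕ :=
  sInf {k | Fintype.card Λ ∣ k ∧ F9Prop Λ C m k}

/-- The partition property underlying `f^{8,*}_Λ(m, C)`: any two members of the subspace
realizing each letter on the same number of blocks get the same color. -/
def F8StarProp (Λ C : Type*) [DecidableEq Λ] (m k : ℕ) : Prop :=
  ∀ d : (Fin k → Λ) → C,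
    ∃ (Ms : Fin m → Finset (Fin k)) (ρ : Fin k → Λ),
      (∀ ℓ, (Ms ℓ).Nonempty) ∧
      (∀ ℓ₁ ℓ₂, ℓ₁ ≠ ℓ₂ → Disjoint (Ms ℓ₁) (Ms ℓ₂)) ∧
      ∀ ν₁ ν₂, InSubspace Ms ρ ν₁ → InSubspace Ms ρ ν₂ →
        (∀ α : Λ, blockCount Ms ν₁ α = blockCount Ms ν₂ α) → d ν₁ = d ν₂

/-- Shelah's number `f^{8,*}_Λ(m, C)`. -/
noncomputable def f8Star (Λ C : Type*) [DecidableEq Λ] (m : ℕ) : ℕ :=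
  sInf {k | F8StarProp Λ C m k}

/-- As `F8StarProp`, but with all blocks of the same size. -/
def F9StarProp (Λ C : Type*) [DecidableEq Λ] (m k : ℕ) : Prop :=
  ∀ d : (Fin k → Λ) → C,
    ∃ (Ms : Fin m → Finset (Fin k)) (ρ : Fin k → Λ),
      (∀ ℓ, (Ms ℓ).Nonempty) ∧
      (∀ ℓ₁ ℓ₂, ℓ₁ ≠ ℓ₂ → Disjoint (Ms ℓ₁) (Ms ℓ₂)) ∧
      (∀ ℓ₁ ℓ₂, (Ms ℓ₁).card = (Ms ℓ₂).card) ∧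
      ∀ ν₁ ν₂, InSubspace Ms ρ ν₁ → InSubspace Ms ρ ν₂ →
        (∀ α : Λ, blockCount Ms ν₁ α = blockCount Ms ν₂ α) → d ν₁ = d ν₂

/-- Shelah's number `f^{9,*}_Λ(m, C)`: the minimal `k` divisible by `|Λ|` with `F9StarProp`. -/
noncomputable def f9Star (Λ C : Type*) [Fintype Λ] [DecidableEq Λ] (m : ℕ) : ℕ :=
  sInf {k | Fintype.card Λ ∣ k ∧ F9StarProp Λ C m k}

/-- As `F9StarProp`, but with all blocks of size exactly `n`. -/
def F9StarFixedProp (Λ C : Type*) [DecidableEq Λ] (n m k : ℕ) : Prop :=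
  ∀ d : (Fin k → Λ) → C,
    ∃ (Ms : Fin m → Finset (Fin k)) (ρ : Fin k → Λ),
      (∀ ℓ, (Ms ℓ).card = n) ∧
      (∀ ℓ₁ ℓ₂, ℓ₁ ≠ ℓ₂ → Disjoint (Ms ℓ₁) (Ms ℓ₂)) ∧
      ∀ ν₁ ν₂, InSubspace Ms ρ ν₁ → InSubspace Ms ρ ν₂ →
        (∀ α : Λ, blockCount Ms ν₁ α = blockCount Ms ν₂ α) → d ν₁ = d ν₂

/-- Shelah's number `f^{9,*}_{Λ,n}(m, C)`. -/
noncomputable def f9StarFixed (Λ C : Type*) [Fintype Λ] [DecidableEq Λ] (n m : ℕ) : ℕ :=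
  sInf {k | Fintype.card Λ ∣ k ∧ F9StarFixedProp Λ C n m k}

/-- The partition property underlying `f^{13}_Λ(m, C)`: there is an `m`-element set `N` and
`ρ` on its complement such that any two extensions of `ρ` realizing each letter equally often
on `N` get the same color. -/
def F13Prop (Λ C : Type*) [DecidableEq Λ] (m k : ℕ) : Prop :=
  ∀ d : (Fin k → Λ) → C,
    ∃ N : Finset (Fin k), N.card = m ∧
      ∃ ρ : Fin k → Λ, ∀ η₁ η₂ : Fin k → Λ,
        (∀ t ∉ N, η₁ t = ρ t) → (∀ t ∉ N, η₂ t = ρ t) →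
        (∀ α : Λ, (N.filter fun t => η₁ t = α).card = (N.filter fun t => η₂ t = α).card) →
        d η₁ = d η₂

/-- The number `f^{13}_Λ(m, C)` of Golshani-Shelah. -/
noncomputable def f13 (Λ C : Type*) [DecidableEq Λ] (m : ℕ) : ℕ :=
  sInf {k | F13Prop Λ C m k}

/-- The Gallai-Witt property: every `C`-coloring of `U_{h,n}` (the `h`-tuples of numbers
below `n`) is constant on a homothetic copy `{⟨m_e + d'⬝i_e : e < h⟩ : i_0, …, i_{h-1} ≤ m}`
of the cube `{0, …, m}^h`. -/
def GWProp (C : Type*) (h m n : ℕ) : Prop :=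
  ∀ d : (Fin h → Fin n) → C,
    ∃ d' : ℕ, 0 < d' ∧ ∃ ms : Fin h → ℕ,
      (∀ e, ms e + d' * m < n) ∧
      ∃ c : C, ∀ i : Fin h → ℕ, (∀ e, i e ≤ m) →
        ∀ hlt : ∀ e, ms e + d' * i e < n,
          d (fun e => ⟨ms e + d' * i e, hlt e⟩) = c

/-- The Gallai-Witt number `w_C(h, m)`. -/
noncomputable def gwNum (C : Type*) (h m : ℕ) : ℕ := sInf {n | GWProp C h m n}

/-- The van der Waerden property: every coloring of `{0, …, N-1}` with `r` colors contains a
monochromatic arithmetic progression of length `m` (with positive common difference). -/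
def VDWProp (r m N : ℕ) : Prop :=
  ∀ d : Fin N → Fin r,
    ∃ a dd : ℕ, 0 < dd ∧ (∀ i < m, a + i * dd < N) ∧
      ∃ c : Fin r, ∀ i : ℕ, i < m → ∀ h : a + i * dd < N, d ⟨a + i * dd, h⟩ = c

/-- The van der Waerden number `w(r, m)`. -/
noncomputable def vdwNum (r m : ℕ) : ℕ := sInf {N | VDWProp r m N}

/-- The coloring `d` of `U_{Fin k, Λ}` admits a monochromatic (combinatorial) line. -/
def HasMonoLine {Λ C : Type*} {k : ℕ} (d : (Fin k → Λ) → C) : Prop :=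
  ∃ N : Finset (Fin k), N.Nonempty ∧ ∃ ρ : Fin k → Λ, ∃ c : C,
    ∀ η : Fin k → Λ, (∀ t ∉ N, η t = ρ t) → (∃ a : Λ, ∀ t ∈ N, η t = a) → d η = c

/-- Property `(⊕)` for `m*`: for every `C`-coloring `d` of
`Ω = {⟨ℓ_α : α ∈ Λ⟩ : Σ_α ℓ_α = m*}` there are `ℓ* > 0` and `⟨ℓ*_α : α ∈ Λ⟩` such that all the
tuples `ℓ̄^α` (obtained from `⟨ℓ*_β⟩` by increasing the `α`-entry by `ℓ*`) lie in `Ω` and get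
the same color. -/
def OplusProp (Λ C : Type*) [Fintype Λ] [DecidableEq Λ] (mstar : ℕ) : Prop :=
  ∀ d : (Λ → ℕ) → C,
    ∃ lstar : ℕ, 0 < lstar ∧ ∃ ls : Λ → ℕ,
      (∀ α : Λ, (∑ β : Λ, Function.update ls α (ls α + lstar) β) = mstar) ∧
      ∃ c : C, ∀ α : Λ, d (Function.update ls α (ls α + lstar)) = c

/-- **Hales-Jewett theorem** (subspace form): for every positive `m` and finite non-empty
alphabet `Λ` and color set `C` there is a positive `k` such that every `C`-coloring of
`U_{M,Λ}`, for `M` a linear order of size `k`, has a monochromatic `m`-dimensional subspace. -/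
theorem halesJewett_subspace (Λ C : Type*) [Fintype Λ] [Nonempty Λ]
    [Fintype C] [Nonempty C] (m : ℕ) (hm : 0 < m) :
    ∃ k : ℕ, 0 < k ∧ HJProp Λ C m k := by
  classical
  obtain ⟨n, hn⟩ := Combinatorics.Subspace.exists_mono_in_high_dimension_fin Λ C (Fin m)
  refine ⟨n, ?_, ?_⟩
  · obtain ⟨l, -⟩ := hn (fun _ => Classical.arbitrary C)
    obtain ⟨i, -⟩ := l.proper ⟨0, hm⟩
    exact i.pos
  · intro d
    obtain ⟨l, c, hc⟩ := hn d
    refine ⟨fun e => Finset.univ.filter fun i => l.idxFun i = Sum.inr e,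
      l (fun _ => Classical.arbitrary Λ), ?_, ?_, c, ?_⟩
    · intro e
      obtain ⟨i, hi⟩ := l.proper e
      exact ⟨i, by simpa using hi⟩
    · intro e₁ e₂ hne
      rw [Finset.disjoint_left]
      intro i h1 h2
      simp only [Finset.mem_filter, Finset.mem_univ, true_and] at h1 h2
      exact hne (Sum.inr_injective (h1.symm.trans h2))
    · rintro ν ⟨h1, h2⟩
      choose x hx using h2
      have hν : ν = l x := by
        funext i
        rcases h : l.idxFun i with a | e
        · rw [h1 i (by simp [h]), Combinatorics.Subspace.apply_inl h,
            Combinatorics.Subspace.apply_inl h]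
        · rw [hx e i (by simp [h]), Combinatorics.Subspace.apply_inr h]
      rw [hν]
      exact hc x
end

section
/- (Van der Waerden's theorem) For all positive integers r and n there exists a least positive integer w(r,n) such that every coloring of {1, …, w(r,n)} with r colors contains a monochromatic arithmetic progression of length n. -/
open Finset

/-- **Van der Waerden's theorem**: for all positive `r` and `n` there is a least positive `N`
such that every `r`-coloring of a set of `N` integers contains a monochromatic `n`-term
arithmetic progression. -/
theorem vanDerWaerden (r n : ℕ) (hr : 0 < r) (hn : 0 < n) :
    ∃ N : ℕ, 0 < N ∧ VDWProp r n N ∧ ∀ N' : ℕ, 0 < N' → VDWProp r n N' → N ≤ N' := by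
  classical
  have key : ∃ N : ℕ, 0 < N ∧ VDWProp r n N := by
    obtain ⟨ι, _, hι⟩ := Combinatorics.Line.exists_mono_in_high_dimension (Fin n) (Fin r)
    have hb : ∀ v : ι → Fin n, ∑ i, (v i : ℕ) < Fintype.card ι * n + 1 := by
      intro v
      have h := Finset.sum_le_card_nsmul Finset.univ (fun i => (v i : ℕ)) n
        (fun i _ => (v i).isLt.le)
      simp only [Finset.card_univ, smul_eq_mul] at h
      omega
    refine ⟨Fintype.card ι * n + 1, Nat.succ_pos _, fun d => ?_⟩
    obtain ⟨l, c, hl⟩ := hι fun v => d ⟨∑ i, (v i : ℕ), hb v⟩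
    let f : ι → ℕ := fun i => ((l.idxFun i).map Fin.val).getD 0
    let g : ι → ℕ := fun i => if l.idxFun i = none then 1 else 0
    have hsum : ∀ x : Fin n, ∑ i, (l x i : ℕ) = ∑ i, f i + (x : ℕ) * ∑ i, g i := by
      intro x
      rw [Finset.mul_sum, ← Finset.sum_add_distrib]
      refine Finset.sum_congr rfl fun i _ => ?_
      rw [Combinatorics.Line.apply_def]
      cases h : l.idxFun i <;> simp [f, g, h]
    refine ⟨∑ i, f i, ∑ i, g i, ?_, ?_, c, ?_⟩
    · obtain ⟨i, hi⟩ := l.proper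
      exact Finset.sum_pos' (fun _ _ => Nat.zero_le _) ⟨i, Finset.mem_univ _, by simp [g, hi]⟩
    · intro i hi
      have h := hsum ⟨i, hi⟩
      simp only at h
      rw [← h]
      exact hb _
    · intro i hi h
      rw [← hl ⟨i, hi⟩]
      congr 2
      exact (hsum ⟨i, hi⟩).symm
  refine ⟨Nat.find key, (Nat.find_spec key).1, (Nat.find_spec key).2, ?_⟩
  intro N' h1 h2
  exact Nat.find_min' key ⟨h1, h2⟩
end

section
/- (Gallai–Witt theorem) For every positive integer h, every natural number m, and every finite non-empty set C of colors, there exists a least positive integer n = w_C(h,m) such that for every coloring d: U_{h,n} → C (where U_{h,n} is the set of functions from {0,…,h−1} to {0,…,n−1}, i.e. h-tuples of numbers below n) there exist an integer d' > 0 and a sequence ⟨m_e : e < h⟩ of natural numbers with m_e + d'·m < n for each e < h, such that d is constant on the set { ⟨m_e + d'·i_e : e < h⟩ : i_0 ≤ m, …, i_{h−1} ≤ m }. -/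
open Finset

/-- Existence of some positive `n` with the Gallai-Witt property, from Hales-Jewett. -/
theorem gwProp_exists (C : Type*) [Fintype C] (h m : ℕ) :
    ∃ n : ℕ, 0 < n ∧ GWProp C h m n := by
  classical
  obtain ⟨ι, _, hι⟩ :=
    Combinatorics.Line.exists_mono_in_high_dimension (Fin h → Fin (m + 1)) C
  refine ⟨Fintype.card ι * m + 1, Nat.succ_pos _, fun d => ?_⟩
  have hbound : ∀ (v : ι → Fin h → Fin (m + 1)) (e : Fin h),
      ∑ t, (v t e : ℕ) < Fintype.card ι * m + 1 := by
    intro v e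
    have : ∑ t, (v t e : ℕ) ≤ ∑ _t : ι, m :=
      Finset.sum_le_sum fun t _ => Nat.lt_succ_iff.mp (v t e).2
    simp only [Finset.sum_const, Finset.card_univ, smul_eq_mul] at this
    omega
  obtain ⟨l, c, hl⟩ := hι fun v => d fun e => ⟨∑ t, (v t e : ℕ), hbound v e⟩
  set S : Finset ι := Finset.univ.filter fun t => l.idxFun t = none with hS
  let ms : Fin h → ℕ := fun e => ∑ t, (l.idxFun t).elim 0 fun a => (a e : ℕ)
  have key : ∀ (x : Fin h → Fin (m + 1)) (e : Fin h),
      ∑ t, (l x t e : ℕ) = ms e + S.card * (x e : ℕ) := by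
    intro x e
    have h1 : S.card * (x e : ℕ) = ∑ t, if l.idxFun t = none then (x e : ℕ) else 0 := by
      rw [← Finset.sum_filter, Finset.sum_const, smul_eq_mul]
    rw [h1, ← Finset.sum_add_distrib]
    refine Finset.sum_congr rfl fun t _ => ?_
    rw [Combinatorics.Line.apply_def]
    cases hc : l.idxFun t <;> simp [hc]
  refine ⟨S.card, ?_, ms, ?_, c, ?_⟩
  · obtain ⟨t, ht⟩ := l.proper
    exact Finset.card_pos.mpr ⟨t, by simp [hS, ht]⟩
  · intro e
    have := key (fun _ => Fin.last m) e
    rw [Fin.val_last] at this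
    rw [← this]
    exact hbound _ e
  · intro i hi hlt
    have := hl fun e => ⟨i e, Nat.lt_succ_of_le (hi e)⟩
    rw [← this]
    congr 1
    funext e
    apply Fin.ext
    exact (key (fun e => ⟨i e, Nat.lt_succ_of_le (hi e)⟩) e).symm

/-- **Gallai-Witt theorem**: for every positive `h`, every `m`, and every finite non-empty
set `C` of colors, there is a least positive `n` with the Gallai-Witt property. -/
theorem gallaiWitt (C : Type*) [Fintype C] [Nonempty C] (h m : ℕ) (hh : 0 < h) :
    ∃ n : ℕ, 0 < n ∧ GWProp C h m n ∧ ∀ n' : ℕ, 0 < n' → GWProp C h m n' → n ≤ n' := by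
  classical
  have hex := gwProp_exists C h m
  exact ⟨Nat.find hex, (Nat.find_spec hex).1, (Nat.find_spec hex).2,
    fun n' h0 h1 => Nat.find_min' hex ⟨h0, h1⟩⟩
end

section
/- For all finite non-empty sets Λ and C and every positive integer m divisible by |Λ|, f^{9,*}_Λ(m,C) ≤ m · hj_C(1, Λ^m), where Λ^m denotes the alphabet consisting of all m-tuples of elements of Λ. -/
open Finset

theorem exists_HJProp_one (A C : Type*) [Fintype A] [Finite C] [Nonempty A] :
    ∃ k, HJProp A C 1 k := by
  classical
  obtain ⟨ι, _, hι⟩ := Combinatorics.Line.exists_mono_in_high_dimension A C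
  let e := Fintype.equivFin ι
  refine ⟨Fintype.card ι, fun d => ?_⟩
  obtain ⟨l, c, hc⟩ := hι (fun v => d (fun t => v (e.symm t)))
  obtain ⟨a₀⟩ := ‹Nonempty A›
  refine ⟨fun _ => Finset.univ.filter (fun t => l.idxFun (e.symm t) = none),
    fun t => (l.idxFun (e.symm t)).getD a₀, fun _ => ?_, ?_, c, ?_⟩
  · obtain ⟨i, hi⟩ := l.proper
    exact ⟨e i, by simp [hi]⟩
  · intro a b h
    exact absurd (Subsingleton.elim a b) h
  · rintro ν ⟨h1, h2⟩
    obtain ⟨a, ha⟩ := h2 0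
    rw [← hc a]
    show d ν = d _
    congr 1
    funext t
    rw [Combinatorics.Line.apply_def]
    cases h : l.idxFun (e.symm t) with
    | none => simpa [h] using ha t (by simp [h])
    | some b =>
      have := h1 t (by simp [h])
      simpa [h] using this

theorem F9StarProp_of_HJProp (Λ C : Type*) [DecidableEq Λ] (m k : ℕ)
    (h : HJProp (Fin m → Λ) C 1 k) : F9StarProp Λ C m (m * k) := by
  classical
  intro d
  let e : Fin m × Fin k ≃ Fin (m * k) := finProdFinEquiv
  obtain ⟨Ms, ρ, hne, -, c, hc⟩ :=
    h (fun v => d (fun t => v (e.symm t).2 (e.symm t).1))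
  have key : ∀ ν, InSubspace (fun ℓ : Fin m => (Ms 0).map
      ⟨fun t => e (ℓ, t), fun a b hab => by simpa using hab⟩)
      (fun t => ρ (e.symm t).2 (e.symm t).1) ν → d ν = c := by
    rintro ν ⟨h1, h2⟩
    choose a ha using h2
    have := hc (fun t ℓ => ν (e (ℓ, t))) ⟨?_, ?_⟩
    · rw [← this]
      simp
    · intro t ht
      funext ℓ
      have := h1 (e (ℓ, t)) (by
        intro ℓ' hm
        simp only [Finset.mem_map] at hm
        obtain ⟨s, hs, hst⟩ := hm
        have := e.injective hst
        simp only [Prod.mk.injEq] at this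
        exact ht 0 (this.2 ▸ hs))
      simpa using this
    · intro z
      refine ⟨a, fun t ht => funext fun ℓ => ha ℓ _ ?_⟩
      rw [Subsingleton.elim z 0] at ht
      exact Finset.mem_map.2 ⟨t, ht, rfl⟩
  refine ⟨_, _, ?_, ?_, ?_, fun ν₁ ν₂ g1 g2 _ => (key ν₁ g1).trans (key ν₂ g2).symm⟩
  · intro ℓ
    simpa using hne 0
  · intro ℓ₁ ℓ₂ hne
    rw [Finset.disjoint_left]
    intro x hx hy
    simp only [Finset.mem_map] at hx hy
    obtain ⟨s, -, rfl⟩ := hx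
    obtain ⟨s', -, h⟩ := hy
    have := e.injective h
    simp only [Prod.mk.injEq] at this
    exact hne this.1.symm
  · intro ℓ₁ ℓ₂
    simp

/-- `f^{9,*}_Λ(m, C) ≤ m · hj_C(1, Λ^m)`, where `Λ^m` is the alphabet of `m`-tuples from `Λ`. -/
theorem f9Star_le_mul_hj (Λ C : Type*) [Fintype Λ] [DecidableEq Λ] [Nonempty Λ]
    [Fintype C] [Nonempty C] (m : ℕ) (hm : 0 < m) (hdvd : Fintype.card Λ ∣ m) :
    f9Star Λ C m ≤ m * hjNum (Fin m → Λ) C 1 := by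
  refine Nat.sInf_le ⟨hdvd.mul_right _, F9StarProp_of_HJProp Λ C m _ ?_⟩
  exact Nat.sInf_mem (s := {k | HJProp (Fin m → Λ) C 1 k}) (exists_HJProp_one _ _)
end

section
/- (Main Theorem) For all finite non-empty sets Λ and C, hj_C(1,Λ) ≤ f^{8,*}_Λ(|Λ|² · w_C(|Λ|, 1), C). -/
open Finset

/-- A function on `Fin m` with prescribed fibre sizes. -/
lemma exists_fun_with_fibres {κ : Type*} [Fintype κ] [DecidableEq κ] (g : κ → ℕ) (m : ℕ)
    (hg : ∑ j, g j = m) :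
    ∃ f : Fin m → κ, ∀ j, (Finset.univ.filter fun i => f i = j).card = g j := by
  have hc : Fintype.card (Σ j, Fin (g j)) = m := by simp [hg]
  let e : Fin m ≃ (Σ j, Fin (g j)) := (Fintype.equivFinOfCardEq hc).symm
  refine ⟨fun i => (e i).1, fun j => ?_⟩
  rw [← Fintype.card_subtype]
  have e1 : {i : Fin m // (e i).1 = j} ≃ {s : (Σ j, Fin (g j)) // s.1 = j} :=
    e.subtypeEquiv (fun _ => Iff.rfl)
  have e2 : {s : (Σ j, Fin (g j)) // s.1 = j} ≃ Fin (g j) := Equiv.sigmaSubtype j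
  rw [Fintype.card_congr (e1.trans e2), Fintype.card_fin]

/-- The Gallai-Witt theorem for the cube `{0,1}^h`. -/
lemma exists_gwProp (C : Type*) [Finite C] (h : ℕ) : ∃ n, GWProp C h 1 n := by
  obtain ⟨ι, _, hι⟩ :=
    Combinatorics.Line.exists_mono_in_high_dimension (Fin h → Fin 2) C
  have hb : ∀ (v : ι → Fin h → Fin 2) (e : Fin h),
      ∑ i, (v i e : ℕ) < Fintype.card ι + 1 := by
    intro v e
    have : ∑ i, (v i e : ℕ) ≤ ∑ _i : ι, 1 := Finset.sum_le_sum fun i _ => by omega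
    simp at this
    omega
  refine ⟨Fintype.card ι + 1, fun d => ?_⟩
  obtain ⟨l, c, hl⟩ := hι (fun v => d fun e => ⟨∑ i, (v i e : ℕ), hb v e⟩)
  have key : ∀ (x : Fin h → Fin 2) (e : Fin h), ∑ i, (l x i e : ℕ) =
      ∑ i, ((l.idxFun i).elim 0 fun a => (a e : ℕ)) +
        (Finset.univ.filter fun i => l.idxFun i = none).card * (x e : ℕ) := by
    intro x e
    rw [Finset.card_filter, Finset.sum_mul, ← Finset.sum_add_distrib]
    refine Finset.sum_congr rfl fun i _ => ?_
    rw [Combinatorics.Line.apply_def]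
    rcases hi : l.idxFun i with _ | a <;> simp [hi]
  refine ⟨(Finset.univ.filter fun i => l.idxFun i = none).card, ?_,
    fun e => ∑ i, ((l.idxFun i).elim 0 fun a => (a e : ℕ)), ?_, c, ?_⟩
  · obtain ⟨i, hi⟩ := l.proper
    exact Finset.card_pos.mpr ⟨i, by simpa using hi⟩
  · intro e
    have h1 := key (fun _ => 1) e
    have h2 := hb (l fun _ => 1) e
    simp only [Fin.val_one] at h1
    dsimp only
    omega
  · intro i hi hlt
    rw [← hl fun e => ⟨i e, by have := hi e; omega⟩]
    dsimp only
    congr 1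
    funext e
    apply Fin.ext
    exact (key (fun e => ⟨i e, by have := hi e; omega⟩) e).symm

lemma exists_f8StarProp (Λ C : Type*) [Finite Λ] [DecidableEq Λ] [Nonempty Λ] [Finite C]
    (m : ℕ) : ∃ k, F8StarProp Λ C m k := by
  obtain ⟨ι, _, hι⟩ :=
    Combinatorics.Subspace.exists_mono_in_high_dimension Λ C (Fin m)
  let e := Fintype.equivFin ι
  refine ⟨Fintype.card ι, fun d => ?_⟩
  obtain ⟨l, c, hl⟩ := hι (fun v => d (v ∘ e.symm))
  obtain ⟨a0⟩ := ‹Nonempty Λ›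
  have hmono : ∀ ν : Fin (Fintype.card ι) → Λ,
      InSubspace (fun ℓ => Finset.univ.filter fun t => l.idxFun (e.symm t) = Sum.inr ℓ)
        (fun t => (l.idxFun (e.symm t)).elim id fun _ => a0) ν → d ν = c := by
    rintro ν ⟨h1, h2⟩
    choose x hx using h2
    rw [← hl x]
    dsimp only
    congr 1
    funext t
    simp only [Function.comp, Combinatorics.Subspace.apply_def]
    rcases ht : l.idxFun (e.symm t) with a | ℓ
    · simpa [ht] using h1 t (by simp [ht])
    · simpa [ht] using hx ℓ t (by simp [ht])
  refine ⟨_, _, ?_, ?_, fun ν₁ ν₂ h1 h2 _ => (hmono ν₁ h1).trans (hmono ν₂ h2).symm⟩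
  · intro ℓ
    obtain ⟨i, hi⟩ := l.proper ℓ
    exact ⟨e i, by simpa using hi⟩
  · intro a b hab
    rw [Finset.disjoint_left]
    intro t ha hb
    simp only [Finset.mem_filter, Finset.mem_univ, true_and] at ha hb
    exact hab (Sum.inr.inj (ha.symm.trans hb))

/-- Property `(⊕)` from Gallai-Witt. -/
lemma oplus_of_gw (Λ C : Type*) [Fintype Λ] [DecidableEq Λ] [Nonempty Λ] (w : ℕ)
    (hw : GWProp C (Fintype.card Λ) 1 w) : OplusProp Λ C (Fintype.card Λ ^ 2 * w) := by
  intro D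
  set m := Fintype.card Λ ^ 2 * w with hm
  obtain ⟨α0⟩ := ‹Nonempty Λ›
  let e := Fintype.equivFin Λ
  obtain ⟨d', hd', ms, hms, c, hc⟩ := hw (fun x => D (Function.update (fun α => (x (e α) : ℕ)) α0
    (m - ∑ α ∈ Finset.univ.erase α0, (x (e α) : ℕ))))
  have hsum : ∑ α ∈ Finset.univ.erase α0, ms (e α) + d' ≤ m := by
    have h1 : ∑ α ∈ Finset.univ.erase α0, ms (e α) + d' ≤ ∑ α, (ms (e α) + d' * 1) := by
      rw [← Finset.sum_erase_add _ _ (Finset.mem_univ α0)]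
      have : ∑ α ∈ Finset.univ.erase α0, ms (e α) ≤
          ∑ α ∈ Finset.univ.erase α0, (ms (e α) + d' * 1) :=
        Finset.sum_le_sum fun _ _ => by omega
      omega
    have h2 : ∑ α, (ms (e α) + d' * 1) ≤ ∑ _α : Λ, w :=
      Finset.sum_le_sum fun α _ => (hms _).le
    have h3 : ∑ _α : Λ, w = Fintype.card Λ * w := by simp
    have h4 : Fintype.card Λ * w ≤ m := by
      rw [hm]
      exact Nat.mul_le_mul_right _ (Nat.le_self_pow (by norm_num) _)
    omega
  refine ⟨d', hd', Function.update (fun α => ms (e α)) α0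
    (m - ∑ α ∈ Finset.univ.erase α0, ms (e α) - d'), ?_, c, ?_⟩
  · intro α
    generalize hq : m - ∑ α ∈ Finset.univ.erase α0, ms (e α) - d' = q
    have hup : ∀ (L : Λ → ℕ) (γ : Λ) (x : ℕ),
        ∑ β, Function.update L γ x β = x + ∑ β ∈ Finset.univ.erase γ, L β := by
      intro L γ x
      rw [← Finset.add_sum_erase _ _ (Finset.mem_univ γ), Function.update_self]
      congr 1
      exact Finset.sum_congr rfl
        fun β hβ => Function.update_of_ne (Finset.ne_of_mem_erase hβ) _ _
    rw [hup, add_right_comm, Finset.add_sum_erase _ _ (Finset.mem_univ α), hup]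
    omega
  · intro α
    have hle : ∀ j, (if e α = j ∧ α ≠ α0 then 1 else 0) ≤ 1 := fun j => by split_ifs <;> simp
    have hlt : ∀ j, ms j + d' * (if e α = j ∧ α ≠ α0 then 1 else 0) < w := fun j => by
      have := hms j
      split_ifs <;> omega
    rw [← hc _ hle hlt]
    congr 1
    by_cases hα : α = α0
    · subst hα
      funext β
      by_cases hβ : β = α
      · subst hβ
        simp
        omega
      · simp [hβ]
    · funext β
      have hs : ∑ β ∈ Finset.univ.erase α0,
          (ms (e β) + d' * (if e α = e β ∧ α ≠ α0 then 1 else 0)) =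
          ∑ β ∈ Finset.univ.erase α0, ms (e β) + d' := by
        rw [Finset.sum_add_distrib]
        simp [hα]
      by_cases hβ : β = α0
      · subst hβ
        rw [Function.update_of_ne (Ne.symm hα), Function.update_self, Function.update_self, hs]
        omega
      · by_cases hβα : β = α
        · subst hβα
          simp [hα]
        · simp [hα, hβ, hβα, Ne.symm hβα]

lemma hj_of_f8Star (Λ C : Type*) [Fintype Λ] [DecidableEq Λ] [hΛ : Nonempty Λ] [Nonempty C]
    (m k : ℕ) (ho : OplusProp Λ C m) (hk : F8StarProp Λ C m k) : HJProp Λ C 1 k := by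
  classical
  intro d
  obtain ⟨Ms, ρ, hne, hdis, hcol⟩ := hk d
  obtain ⟨c0⟩ := ‹Nonempty C›
  let D : (Λ → ℕ) → C := fun g =>
    if h : ∃ ν, InSubspace Ms ρ ν ∧ blockCount Ms ν = g then d h.choose else c0
  have hD : ∀ ν, InSubspace Ms ρ ν → d ν = D (blockCount Ms ν) := by
    intro ν hν
    have h : ∃ ν', InSubspace Ms ρ ν' ∧ blockCount Ms ν' = blockCount Ms ν := ⟨ν, hν, rfl⟩
    simp only [D, dif_pos h]
    exact hcol _ _ hν h.choose_spec.1 fun α => (congrFun h.choose_spec.2 α).symm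
  obtain ⟨d', hd', ls, hls, c, hc⟩ := ho D
  obtain ⟨α0⟩ := hΛ
  have hup : ∀ α β, Function.update ls α (ls α + d') β = ls β + if α = β then d' else 0 := by
    intro α β
    by_cases h : α = β
    · subst h; simp
    · simp [h, Function.update_of_ne (Ne.symm h)]
  obtain ⟨f, hf⟩ := exists_fun_with_fibres (fun o : Option Λ => o.elim d' ls) m (by
    have := hls α0
    simp only [hup, Finset.sum_add_distrib] at this
    rw [Fintype.sum_option]
    simp at this ⊢
    omega)
  have huniq : ∀ t ℓ ℓ', t ∈ Ms ℓ → t ∈ Ms ℓ' → ℓ = ℓ' := by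
    intro t ℓ ℓ' h h'
    by_contra hn
    exact Finset.disjoint_left.mp (hdis _ _ hn) h h'
  refine ⟨fun _ => Finset.univ.filter fun t => ∃ ℓ, f ℓ = none ∧ t ∈ Ms ℓ,
    fun t => if h : ∃ ℓ, t ∈ Ms ℓ then (f h.choose).getD (ρ t) else ρ t, ?_, ?_, c, ?_⟩
  · intro _
    have h0 := hf none
    simp only [Option.elim_none] at h0
    obtain ⟨ℓ, hℓ⟩ := Finset.card_pos.mp (h0.symm ▸ hd')
    obtain ⟨t, ht⟩ := hne ℓ
    exact ⟨t, by simpa using ⟨ℓ, by simpa using hℓ, ht⟩⟩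
  · intro a b hab
    exact (hab (Subsingleton.elim a b)).elim
  · rintro ν ⟨h1, h2⟩
    obtain ⟨α, hα⟩ := h2 0
    have hv : ∀ ℓ, ∀ t ∈ Ms ℓ, ν t = (f ℓ).getD α := by
      intro ℓ t ht
      rcases hfl : f ℓ with _ | β
      · exact hα t (by simpa using ⟨ℓ, hfl, ht⟩)
      · rw [h1 t ?_]
        · have hex : ∃ ℓ, t ∈ Ms ℓ := ⟨ℓ, ht⟩
          dsimp only
          rw [dif_pos hex, huniq t _ ℓ hex.choose_spec ht, hfl]
          rfl
        · intro _ hmem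
          simp only [Finset.mem_filter, Finset.mem_univ, true_and] at hmem
          obtain ⟨ℓ', h', ht'⟩ := hmem
          rw [huniq t _ ℓ ht' ht, hfl] at h'
          cases h'
    have hin : InSubspace Ms ρ ν := by
      refine ⟨fun t ht => ?_, fun ℓ => ⟨_, hv ℓ⟩⟩
      have hex : ¬ ∃ ℓ, t ∈ Ms ℓ := by simpa using ht
      rw [h1 t ?_]
      · dsimp only
        rw [dif_neg hex]
      intro _ hmem
      simp only [Finset.mem_filter, Finset.mem_univ, true_and] at hmem
      obtain ⟨ℓ', h', ht'⟩ := hmem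
      exact ht _ ht'
    rw [hD ν hin, ← hc α]
    congr 1
    funext β
    rw [hup, blockCount]
    have hset : (Finset.univ.filter fun ℓ : Fin m => ∀ t ∈ Ms ℓ, ν t = β) =
        (Finset.univ.filter fun ℓ => f ℓ = some β) ∪
          (Finset.univ.filter fun ℓ => f ℓ = none ∧ α = β) := by
      ext ℓ
      have hiff : (∀ t ∈ Ms ℓ, ν t = β) ↔ (f ℓ).getD α = β := by
        constructor
        · intro h
          obtain ⟨t, ht⟩ := hne ℓ
          rw [← hv ℓ t ht, h t ht]
        · intro h t ht
          rw [hv ℓ t ht, h]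
      simp only [Finset.mem_filter, Finset.mem_univ, true_and, Finset.mem_union, hiff]
      rcases f ℓ with _ | γ <;> simp
    rw [hset, Finset.card_union_of_disjoint, hf (some β)]
    · by_cases hαβ : α = β
      · simpa [hαβ] using hf none
      · simp [hαβ]
    · rw [Finset.disjoint_left]
      intro ℓ ha hb
      simp only [Finset.mem_filter, Finset.mem_univ, true_and] at ha hb
      rw [ha] at hb
      cases hb.1

/-- **Main Theorem**: `hj_C(1, Λ) ≤ f^{8,*}_Λ(|Λ|² · w_C(|Λ|, 1), C)`. -/
theorem hj_le_f8Star (Λ C : Type*) [Fintype Λ] [DecidableEq Λ] [Nonempty Λ]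
    [Fintype C] [Nonempty C] :
    hjNum Λ C 1 ≤ f8Star Λ C (Fintype.card Λ ^ 2 * gwNum C (Fintype.card Λ) 1) := by
  have h1 : GWProp C (Fintype.card Λ) 1 (gwNum C (Fintype.card Λ) 1) :=
    Nat.sInf_mem (s := {n | GWProp C (Fintype.card Λ) 1 n}) (exists_gwProp C _)
  generalize gwNum C (Fintype.card Λ) 1 = w at h1
  have h2 : F8StarProp Λ C (Fintype.card Λ ^ 2 * w) (f8Star Λ C (Fintype.card Λ ^ 2 * w)) :=
    Nat.sInf_mem (s := {k | F8StarProp Λ C (Fintype.card Λ ^ 2 * w) k}) (exists_f8StarProp Λ C _)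
  exact Nat.sInf_le (hj_of_f8Star Λ C _ _ (oplus_of_gw Λ C w h1) h2)
end
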